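/- Let c₀ > 0. For each n, let p = p(n) > n be an integer, let Σ = Σ(n) be a p×p real symmetric positive-definite matrix with smallest eigenvalue at least c₀, and let X = X(n) be a random n×p matrix whose rows are independent and identically distributed according to the multivariate Gaussian distribution N(0, Σ) on ℝ^p. Assume log p(n) = o(n) as n → ∞. Then there exist positive constants c and c̃ (not depending on n) such that P( for every subset α ⊆ {1,…,p} with |α| < c̃·n/(log p), the smallest singular value of the submatrix n^{−1/2}X_α is at least c ) → 1 as n → ∞; equivalently, the robust spark κ_c of X satisfies κ_c ≥ c̃·n/(log p) with asymptotic probability one. -/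

import Mathlib

open scoped BigOperators
open MeasureTheory Filter

/-!
Fix a set `α` of `k` columns. Multiplying `X_α` by an inverse square root of `Σ_αα` makes its rows
isotropic, so assume `Σ_αα = 1`. By Chernoff bounds for the chi-square law, each column of `X_α` has
norm at most `3√n`, and each fixed vector `b` with `‖b‖ ≥ 1/2` satisfies `‖X_α b‖ ≥ √n/10`, outside
events of probability `2⁻ⁿ`. Rounding a unit vector `a` to the grid of step `1/(60k)` changes
`‖X_α a‖` by at most `k · (1/(60k)) · 3√n = √n/20`, so these bounds for the columns and the grid
points force `‖X_α a‖ ≥ √n/20` for all unit vectors `a`. The union over at most `(120k + 1)^k` grid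
points costs only a factor `p^(8k)`. When `k` is a small multiple of `n / log p`, even `p^(9k)` is
at most `(3/2)ⁿ`; the spare factor `p^(-k)` pays for the union over `α`, since
`∑_α p^(-|α|) = (1 + 1/p)^p ≤ e`.
-/

open ProbabilityTheory Matrix Topology
open scoped Finset NNReal

section

variable {ι κ m Ω : Type*} [Fintype ι] [Fintype κ] [MeasurableSpace Ω] {P : Measure Ω}

section SumSqTails

lemma mgf_sq_gaussianReal {v : ℝ≥0} {t : ℝ} (ht : 2 * t * v < 1) :
    mgf (fun x => x ^ 2) (gaussianReal 0 v) t = (√(1 - 2 * t * v))⁻¹ := by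
  rcases eq_or_ne v 0 with rfl | hv
  · simp [mgf]
  have : (0 : ℝ) < v := by positivity
  have hdensity (x : ℝ) : gaussianPDFReal 0 v x • Real.exp (t * x ^ 2) =
      (√(2 * Real.pi * v))⁻¹ * Real.exp (-((1 - 2 * t * v) / (2 * v)) * x ^ 2) := by
    rw [gaussianPDFReal, smul_eq_mul, mul_assoc, ← Real.exp_add]
    congr 2
    field_simp
    ring
  rw [mgf, integral_gaussianReal_eq_integral_smul hv]
  simp only [hdensity]
  rw [integral_const_mul, integral_gaussian, ← Real.sqrt_inv, ← Real.sqrt_inv,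
    ← Real.sqrt_mul (by positivity)]
  congr 1
  field_simp

variable {g : ι → Ω → ℝ} {v : ℝ≥0}

lemma mgf_sum_sq_of_hasLaw_gaussianReal (hg : iIndepFun g P)
    (hlaw : ∀ i, HasLaw (g i) (gaussianReal 0 v) P) {t : ℝ} (ht : 2 * t * v < 1) :
    mgf (fun ω => ∑ i, g i ω ^ 2) P t = (√(1 - 2 * t * v))⁻¹ ^ Fintype.card ι := by
  have hsq : iIndepFun (fun i ω => g i ω ^ 2) P :=
    hg.comp (fun _ x => x ^ 2) fun _ => by fun_prop
  have hmgf (i : ι) : mgf (fun ω => g i ω ^ 2) P t = (√(1 - 2 * t * v))⁻¹ := by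
    rw [← mgf_sq_gaussianReal ht, ← (hlaw i).map_eq, mgf_map (hlaw i).aemeasurable (by fun_prop)]
    rfl
  have hsum := hsq.mgf_sum₀ (t := t) (fun i => (hlaw i).aemeasurable.pow_const 2) Finset.univ
  simpa only [hmgf, Finset.prod_const, Finset.card_univ, Finset.sum_fn] using hsum

lemma integrable_exp_mul_sum_sq (hg : iIndepFun g P)
    (hlaw : ∀ i, HasLaw (g i) (gaussianReal 0 v) P) {t : ℝ} (ht : 2 * t * v < 1) :
    Integrable (fun ω => Real.exp (t * ∑ i, g i ω ^ 2)) P := by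
  have := hg.isProbabilityMeasure
  rw [← mgf_pos_iff, mgf_sum_sq_of_hasLaw_gaussianReal hg hlaw ht]
  have : 0 < 1 - 2 * t * v := by linarith
  positivity

lemma measureReal_sum_sq_le_card_div_hundred_le (hg : iIndepFun g P)
    (hlaw : ∀ i, HasLaw (g i) (gaussianReal 0 v) P) (hv : 1 / 4 ≤ (v : ℝ)) :
    P.real {ω | ∑ i, g i ω ^ 2 ≤ Fintype.card ι / 100} ≤ (1 / 2) ^ Fintype.card ι := by
  have := hg.isProbabilityMeasure
  have ht : 2 * (-100) * (v : ℝ) < 1 := by linarith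
  have hsqrt : (√(1 - 2 * (-100) * v))⁻¹ ≤ 1 / 7 := by
    rw [inv_le_comm₀ (Real.sqrt_pos.2 (by linarith)) (by norm_num)]
    exact Real.le_sqrt_of_sq_le (by linarith)
  calc P.real {ω | ∑ i, g i ω ^ 2 ≤ Fintype.card ι / 100}
      ≤ Real.exp (-(-100) * (Fintype.card ι / 100)) * mgf (fun ω => ∑ i, g i ω ^ 2) P (-100) :=
        measure_le_le_exp_mul_mgf _ (by norm_num) (integrable_exp_mul_sum_sq hg hlaw ht)
    _ = (Real.exp 1 * (√(1 - 2 * (-100) * v))⁻¹) ^ Fintype.card ι := by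
        rw [mgf_sum_sq_of_hasLaw_gaussianReal hg hlaw ht, mul_pow, ← Real.exp_nat_mul]
        congr 2
        ring
    _ ≤ (1 / 2) ^ Fintype.card ι := by
        gcongr
        nlinarith [Real.exp_one_lt_d9, Real.exp_pos 1]

lemma measureReal_nine_mul_card_le_sum_sq_le (hg : iIndepFun g P)
    (hlaw : ∀ i, HasLaw (g i) (gaussianReal 0 1) P) :
    P.real {ω | 9 * Fintype.card ι ≤ ∑ i, g i ω ^ 2} ≤ (1 / 2) ^ Fintype.card ι := by
  have := hg.isProbabilityMeasure
  have ht : 2 * (1 / 4) * ((1 : ℝ≥0) : ℝ) < 1 := by norm_num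
  have hexp : Real.exp (-(9 / 4)) ≤ 1 / 3 := by
    rw [Real.exp_neg, inv_le_comm₀ (Real.exp_pos _) (by norm_num)]
    linarith [Real.add_one_le_exp (9 / 4 : ℝ)]
  have hsqrt : (√(1 - 2 * (1 / 4) * ((1 : ℝ≥0) : ℝ)))⁻¹ ≤ 3 / 2 := by
    rw [inv_le_comm₀ (Real.sqrt_pos.2 (by norm_num)) (by norm_num)]
    exact Real.le_sqrt_of_sq_le (by norm_num)
  calc P.real {ω | 9 * Fintype.card ι ≤ ∑ i, g i ω ^ 2}
      ≤ Real.exp (-(1 / 4) * (9 * Fintype.card ι)) * mgf (fun ω => ∑ i, g i ω ^ 2) P (1 / 4) :=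
        measure_ge_le_exp_mul_mgf _ (by norm_num) (integrable_exp_mul_sum_sq hg hlaw ht)
    _ = (Real.exp (-(9 / 4)) * (√(1 - 2 * (1 / 4) * ((1 : ℝ≥0) : ℝ)))⁻¹) ^ Fintype.card ι := by
        rw [mgf_sum_sq_of_hasLaw_gaussianReal hg hlaw ht, mul_pow, ← Real.exp_nat_mul]
        congr 2
        ring
    _ ≤ (1 / 3 * (3 / 2)) ^ Fintype.card ι := by gcongr
    _ = (1 / 2) ^ Fintype.card ι := by norm_num

end SumSqTails

section Grid

variable (κ) in
/-- The points of the cube `[-1, 1]^κ` whose coordinates are integer multiples of `1 / N`: a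
`1 / N`-net of the cube in the sup norm. -/
noncomputable def cubeGrid (N : ℕ) : Finset (κ → ℝ) :=
  open Classical in
  Fintype.piFinset fun _ => (Finset.Icc (-N : ℤ) N).image fun k : ℤ => (k : ℝ) / N

lemma card_cubeGrid_le (N : ℕ) : #(cubeGrid κ N) ≤ (2 * N + 1) ^ Fintype.card κ := by
  classical
  rw [cubeGrid, Fintype.card_piFinset, Finset.prod_const, Finset.card_univ]
  gcongr
  refine Finset.card_image_le.trans_eq ?_
  rw [Int.card_Icc]
  omega

lemma exists_mem_cubeGrid_norm_sub_le {N : ℕ} (hN : 0 < N) {a : κ → ℝ} (ha : ‖a‖ ≤ 1) :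
    ∃ b ∈ cubeGrid κ N, ‖a - b‖ ≤ 1 / N := by
  have : (0 : ℝ) < N := by exact_mod_cast hN
  refine ⟨fun l => ⌊a l * N⌋ / N, ?_, (pi_norm_le_iff_of_nonneg (by positivity)).2 fun l => ?_⟩
  · simp only [cubeGrid, Fintype.mem_piFinset, Finset.mem_image, Finset.mem_Icc]
    refine fun l => ⟨⌊a l * N⌋, ⟨Int.le_floor.2 ?_, ?_⟩, rfl⟩ <;>
      have hal := abs_le.1 ((norm_le_pi_norm a l).trans ha)
    · push_cast
      nlinarith
    · have hfloor : (⌊a l * N⌋ : ℝ) ≤ N := (Int.floor_le _).trans (by nlinarith)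
      exact_mod_cast hfloor
  · have hfract : a l - ⌊a l * N⌋ / N = Int.fract (a l * N) / N := by
      rw [Int.fract]
      field_simp
    rw [Pi.sub_apply, hfract, Real.norm_of_nonneg (by positivity)]
    gcongr
    exact (Int.fract_lt_one _).le

lemma dotProduct_le_card_mul_norm_mul_norm (a b : κ → ℝ) :
    a ⬝ᵥ b ≤ Fintype.card κ * (‖a‖ * ‖b‖) := by
  calc a ⬝ᵥ b ≤ ∑ _l : κ, ‖a‖ * ‖b‖ := Finset.sum_le_sum fun l _ =>
        (Real.le_norm_self _).trans <| (norm_mul_le _ _).trans <|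
          mul_le_mul (norm_le_pi_norm a l) (norm_le_pi_norm b l) (norm_nonneg _) (norm_nonneg _)
    _ = Fintype.card κ * (‖a‖ * ‖b‖) := by simp

lemma norm_le_sqrt_dotProduct_self (a : κ → ℝ) : ‖a‖ ≤ √(a ⬝ᵥ a) := by
  refine (pi_norm_le_iff_of_nonneg (Real.sqrt_nonneg _)).2 fun l => Real.abs_le_sqrt ?_
  rw [sq]
  exact Finset.single_le_sum (f := fun l => a l * a l) (fun l _ => mul_self_nonneg _)
    (Finset.mem_univ l)

lemma seminorm_le_card_mul_norm [DecidableEq κ] (q : Seminorm ℝ (κ → ℝ)) {R : ℝ}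
    (hq : ∀ l, q (Pi.single l 1) ≤ R) (a : κ → ℝ) : q a ≤ Fintype.card κ * (‖a‖ * R) := by
  calc q a = q (∑ l, a l • Pi.single l 1) := by rw [← pi_eq_sum_univ' a]
    _ ≤ ∑ l, q (a l • Pi.single l 1) :=
        Finset.le_sum_of_subadditive q (map_zero q).le (map_add_le_add q) _ _
    _ = ∑ l, ‖a l‖ * q (Pi.single l 1) := by simp only [map_smul_eq_mul]
    _ ≤ ∑ _l : κ, ‖a‖ * R := Finset.sum_le_sum fun l _ =>
        mul_le_mul (norm_le_pi_norm a l) (hq l) (apply_nonneg q _) (norm_nonneg _)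
    _ = Fintype.card κ * (‖a‖ * R) := by simp

lemma le_seminorm_of_le_on_cubeGrid [DecidableEq κ] (q : Seminorm ℝ (κ → ℝ)) {r : ℝ}
    (hcol : ∀ l, q (Pi.single l 1) ≤ 3 * r)
    (hgrid : ∀ b ∈ cubeGrid κ (60 * Fintype.card κ), 1 / 4 ≤ b ⬝ᵥ b → r / 10 ≤ q b)
    {a : κ → ℝ} (ha : a ⬝ᵥ a = 1) : r / 20 ≤ q a := by
  have hκ : Nonempty κ := by
    by_contra! h
    simp at ha
  have : (0 : ℝ) < Fintype.card κ := by exact_mod_cast Fintype.card_pos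
  have ha1 : ‖a‖ ≤ 1 := by simpa [ha] using norm_le_sqrt_dotProduct_self a
  have hr : 0 ≤ r := by
    obtain ⟨l⟩ := hκ
    linarith [hcol l, apply_nonneg q (Pi.single l 1)]
  obtain ⟨b, hb, hab⟩ := exists_mem_cubeGrid_norm_sub_le
    (Nat.mul_pos (by norm_num : 0 < 60) (Fintype.card_pos (α := κ))) ha1
  have hδ : Fintype.card κ * ‖a - b‖ ≤ 1 / 60 := by
    calc Fintype.card κ * ‖a - b‖
        ≤ Fintype.card κ * (1 / (60 * Fintype.card κ : ℕ)) := by gcongr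
      _ = 1 / 60 := by push_cast; field_simp
  have hbb : 1 / 4 ≤ b ⬝ᵥ b := by
    have hexpand : b ⬝ᵥ b = a ⬝ᵥ a - 2 * a ⬝ᵥ (a - b) + (a - b) ⬝ᵥ (a - b) := by
      simp only [dotProduct_sub, sub_dotProduct, dotProduct_comm b a]
      ring
    have hcross : a ⬝ᵥ (a - b) ≤ 1 / 60 := by
      calc a ⬝ᵥ (a - b) ≤ Fintype.card κ * (‖a‖ * ‖a - b‖) :=
            dotProduct_le_card_mul_norm_mul_norm a _
        _ ≤ Fintype.card κ * (1 * ‖a - b‖) := by gcongr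
        _ ≤ 1 / 60 := by rwa [one_mul]
    have hnonneg : 0 ≤ (a - b) ⬝ᵥ (a - b) := by
      simpa using dotProduct_star_self_nonneg (a - b)
    linarith
  have hqab : q (a - b) ≤ r / 20 := by
    calc q (a - b) ≤ Fintype.card κ * (‖a - b‖ * (3 * r)) := seminorm_le_card_mul_norm q hcol _
      _ = Fintype.card κ * ‖a - b‖ * (3 * r) := by ring
      _ ≤ 1 / 60 * (3 * r) := by gcongr
      _ = r / 20 := by ring
  have htri : q b ≤ q a + q (a - b) := by
    simpa using map_sub_le_add q a (a - b)
  linarith [hgrid b hb hbb]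

/-- The seminorm `a ↦ ‖x a‖₂` of the matrix with rows `x i`. -/
noncomputable def rowSeminorm (x : ι → κ → ℝ) : Seminorm ℝ (κ → ℝ) :=
  (normSeminorm ℝ (EuclideanSpace ℝ ι)).comp
    ((WithLp.linearEquiv 2 ℝ (ι → ℝ)).symm.toLinearMap ∘ₗ (Matrix.of x).mulVecLin)

lemma rowSeminorm_sq (x : ι → κ → ℝ) (a : κ → ℝ) :
    rowSeminorm x a ^ 2 = ∑ i, (x i ⬝ᵥ a) ^ 2 :=
  EuclideanSpace.real_norm_sq_eq _

lemma le_sum_sq_of_le_on_cubeGrid (x : ι → κ → ℝ) {s : ℝ} (hs : 0 ≤ s)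
    (hcol : ∀ l, ∑ i, x i l ^ 2 ≤ 9 * s)
    (hgrid : ∀ b ∈ cubeGrid κ (60 * Fintype.card κ), 1 / 4 ≤ b ⬝ᵥ b →
      s / 100 ≤ ∑ i, (x i ⬝ᵥ b) ^ 2) (a : κ → ℝ) :
    s / 400 * (a ⬝ᵥ a) ≤ ∑ i, (x i ⬝ᵥ a) ^ 2 := by
  classical
  rcases eq_or_ne a 0 with rfl | ha
  · simp
  have haa : 0 < a ⬝ᵥ a := by simpa using dotProduct_star_self_pos_iff.2 ha
  have : √(a ⬝ᵥ a) ≠ 0 := (Real.sqrt_pos.2 haa).ne'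
  have hunit : √s / 20 ≤ rowSeminorm x ((√(a ⬝ᵥ a))⁻¹ • a) := by
    refine le_seminorm_of_le_on_cubeGrid (rowSeminorm x) (fun l => ?_) (fun b hb hbb => ?_) ?_
    · refine le_of_sq_le_sq ?_ (by positivity)
      rw [rowSeminorm_sq, mul_pow, Real.sq_sqrt hs]
      simpa only [dotProduct_single_one, show (3 : ℝ) ^ 2 = 9 by norm_num] using hcol l
    · refine le_of_sq_le_sq ?_ (apply_nonneg _ _)
      rw [rowSeminorm_sq, div_pow, Real.sq_sqrt hs]
      simpa only [show (10 : ℝ) ^ 2 = 100 by norm_num] using hgrid b hb hbb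
    · rw [smul_dotProduct, dotProduct_smul, smul_smul, smul_eq_mul, ← mul_inv,
        Real.mul_self_sqrt haa.le, inv_mul_cancel₀ haa.ne']
  have hscaled : √s / 20 * √(a ⬝ᵥ a) ≤ rowSeminorm x a := by
    rw [map_smul_eq_mul, Real.norm_of_nonneg (by positivity)] at hunit
    rwa [← le_inv_mul_iff₀' (by positivity)]
  calc s / 400 * (a ⬝ᵥ a) = (√s / 20 * √(a ⬝ᵥ a)) ^ 2 := by
        rw [mul_pow, div_pow, Real.sq_sqrt hs, Real.sq_sqrt haa.le]
        norm_num
    _ ≤ rowSeminorm x a ^ 2 := by gcongr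
    _ = ∑ i, (x i ⬝ᵥ a) ^ 2 := rowSeminorm_sq x a

end Grid

section GaussianMarginals

/-- Every linear functional `v` of the random vector `Y` has law `N(0, vᵀ S v)`, i.e. `Y` is a
centred Gaussian vector with covariance `S`. -/
def HasGaussianMarginals (Y : Ω → κ → ℝ) (S : Matrix κ κ ℝ) (P : Measure Ω) : Prop :=
  ∀ v, HasLaw (fun ω => Y ω ⬝ᵥ v) (gaussianReal 0 (v ⬝ᵥ S *ᵥ v).toNNReal) P

lemma mulVec_dotProduct_mulVec_mulVec [Fintype m] (S : Matrix m m ℝ) (L : Matrix m κ ℝ)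
    (v : κ → ℝ) : (L *ᵥ v) ⬝ᵥ S *ᵥ (L *ᵥ v) = v ⬝ᵥ (Lᵀ * S * L) *ᵥ v := by
  rw [← mulVec_mulVec, ← mulVec_mulVec, dotProduct_mulVec v, vecMul_transpose]

lemma HasGaussianMarginals.vecMul [Fintype m] {Y : Ω → m → ℝ} {S : Matrix m m ℝ}
    (hY : HasGaussianMarginals Y S P) (L : Matrix m κ ℝ) :
    HasGaussianMarginals (fun ω => Y ω ᵥ* L) (Lᵀ * S * L) P := by
  intro v
  rw [← mulVec_dotProduct_mulVec_mulVec]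
  simpa only [← dotProduct_mulVec] using hY (L *ᵥ v)

open scoped MatrixOrder Matrix.Norms.L2Operator in
lemma exists_whitening_of_posDef [Fintype m] [DecidableEq m] {S : Matrix m m ℝ} (hS : S.PosDef)
    (α : Finset m) :
    ∃ L : Matrix m α ℝ, Lᵀ * S * L = 1 ∧ ∀ v, (∀ j ∉ α, v j = 0) → ∃ a, L *ᵥ a = v := by
  obtain ⟨B, hB, hSB⟩ := CStarAlgebra.isStrictlyPositive_iff_eq_star_mul_self.1
    (hS.submatrix (e := ((↑) : α → m)) Subtype.val_injective).isStrictlyPositive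
  have hdet : IsUnit B.det := B.isUnit_iff_isUnit_det.1 hB
  let E : Matrix m α ℝ := (1 : Matrix m m ℝ).submatrix id (↑)
  have hE : Eᵀ * S * E = Bᵀ * B := by
    rw [← conjTranspose_eq_transpose_of_trivial B, ← star_eq_conjTranspose, ← hSB]
    ext i j
    simp [E, mul_apply, one_apply]
  refine ⟨E * B⁻¹, ?_, fun v hv => ⟨B *ᵥ fun j => v j, ?_⟩⟩
  · calc (E * B⁻¹)ᵀ * S * (E * B⁻¹) = (B⁻¹)ᵀ * (Eᵀ * S * E) * B⁻¹ := by
          simp only [transpose_mul, Matrix.mul_assoc]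
      _ = (B * B⁻¹)ᵀ * (B * B⁻¹) := by simp only [hE, transpose_mul, Matrix.mul_assoc]
      _ = 1 := by rw [mul_nonsing_inv _ hdet, transpose_one, one_mul]
  · rw [mulVec_mulVec, Matrix.mul_assoc, nonsing_inv_mul _ hdet, Matrix.mul_one]
    ext j
    have hEv : (E *ᵥ fun i : α => v i) j = if j ∈ α then v j else 0 := by
      simp only [E, mulVec, dotProduct, submatrix_apply, id, one_apply, ite_mul, one_mul, zero_mul,
        Finset.univ_eq_attach]
      rw [Finset.sum_attach α fun i => if j = i then v i else 0, Finset.sum_ite_eq]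
    rw [hEv, ite_eq_left_iff]
    exact fun hj => (hv j hj).symm

end GaussianMarginals

section SubmatrixBound

lemma measureReal_exists_mem_le_card_mul {β : Type*} [IsFiniteMeasure P] (s : Finset β)
    (A : β → Ω → Prop) {ε : ℝ} (hA : ∀ b ∈ s, P.real {ω | A b ω} ≤ ε) :
    P.real {ω | ∃ b ∈ s, A b ω} ≤ #s * ε := by
  calc P.real {ω | ∃ b ∈ s, A b ω} = P.real (⋃ b ∈ s, {ω | A b ω}) := by
        congr 1
        ext ω
        simp only [Set.mem_ofPred_eq, Set.mem_iUnion, exists_prop]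
    _ ≤ ∑ b ∈ s, P.real {ω | A b ω} := measureReal_biUnion_finset_le _ _
    _ ≤ #s * ε := by simpa only [nsmul_eq_mul] using Finset.sum_le_card_nsmul s _ _ hA

lemma iIndepFun_dotProduct_const {β : Type*} {Y : β → Ω → κ → ℝ} (hindep : iIndepFun Y P)
    (a : κ → ℝ) : iIndepFun (fun i ω => Y i ω ⬝ᵥ a) P :=
  hindep.comp (fun _ y => y ⬝ᵥ a) fun _ => by
    simp only [dotProduct]
    fun_prop

variable [DecidableEq κ] {Y : ι → Ω → κ → ℝ}

lemma measureReal_exists_nine_mul_card_le_sum_column_sq_le (hindep : iIndepFun Y P)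
    (hY : ∀ i, HasGaussianMarginals (Y i) 1 P) :
    P.real {ω | ∃ l, 9 * Fintype.card ι ≤ ∑ i, Y i ω l ^ 2} ≤
      Fintype.card κ * (1 / 2) ^ Fintype.card ι := by
  have := hindep.isProbabilityMeasure
  have hcolumn (l : κ) :
      P.real {ω | 9 * Fintype.card ι ≤ ∑ i, Y i ω l ^ 2} ≤ (1 / 2) ^ Fintype.card ι := by
    have hindepl := iIndepFun_dotProduct_const hindep (Pi.single l 1)
    simp only [dotProduct_single_one] at hindepl
    exact measureReal_nine_mul_card_le_sum_sq_le hindepl fun i => by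
      simpa using hY i (Pi.single l 1)
  simpa only [Finset.mem_univ, true_and, Finset.card_univ] using
    measureReal_exists_mem_le_card_mul Finset.univ _ fun l _ => hcolumn l

lemma measureReal_exists_mem_cubeGrid_sum_sq_le_le (hindep : iIndepFun Y P)
    (hY : ∀ i, HasGaussianMarginals (Y i) 1 P) (N : ℕ) :
    P.real {ω | ∃ b ∈ cubeGrid κ N, 1 / 4 ≤ b ⬝ᵥ b ∧
        ∑ i, (Y i ω ⬝ᵥ b) ^ 2 ≤ Fintype.card ι / 100} ≤
      (2 * N + 1) ^ Fintype.card κ * (1 / 2) ^ Fintype.card ι := by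
  have := hindep.isProbabilityMeasure
  have hpoint (b : κ → ℝ) : P.real {ω | 1 / 4 ≤ b ⬝ᵥ b ∧
      ∑ i, (Y i ω ⬝ᵥ b) ^ 2 ≤ Fintype.card ι / 100} ≤ (1 / 2) ^ Fintype.card ι := by
    by_cases hb : 1 / 4 ≤ b ⬝ᵥ b
    · simp only [hb, true_and]
      refine measureReal_sum_sq_le_card_div_hundred_le (iIndepFun_dotProduct_const hindep b)
        (v := (b ⬝ᵥ b).toNNReal) (fun i => ?_) (hb.trans (Real.le_coe_toNNReal _))
      simpa only [one_mulVec] using hY i b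
    · simp only [hb, false_and, Set.ofPred_false, measureReal_empty]
      positivity
  refine (measureReal_exists_mem_le_card_mul _ _ fun b _ => hpoint b).trans ?_
  gcongr
  exact_mod_cast card_cubeGrid_le N

lemma measureReal_exists_sum_sq_lt_of_isotropic (hindep : iIndepFun Y P)
    (hY : ∀ i, HasGaussianMarginals (Y i) 1 P) :
    P.real {ω | ∃ a, ∑ i, (Y i ω ⬝ᵥ a) ^ 2 < Fintype.card ι / 400 * (a ⬝ᵥ a)} ≤
      2 * (120 * Fintype.card κ + 1) ^ Fintype.card κ * (1 / 2) ^ Fintype.card ι := by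
  have := hindep.isProbabilityMeasure
  set k := Fintype.card κ
  set n := Fintype.card ι
  let longColumn : Set Ω := {ω | ∃ l, 9 * n ≤ ∑ i, Y i ω l ^ 2}
  let shortImage : Set Ω := {ω | ∃ b ∈ cubeGrid κ (60 * k), 1 / 4 ≤ b ⬝ᵥ b ∧
    ∑ i, (Y i ω ⬝ᵥ b) ^ 2 ≤ n / 100}
  have hcover : {ω | ∃ a, ∑ i, (Y i ω ⬝ᵥ a) ^ 2 < n / 400 * (a ⬝ᵥ a)} ⊆
      longColumn ∪ shortImage := by
    rintro ω ⟨a, ha⟩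
    contrapose! ha
    simp only [longColumn, shortImage, Set.mem_union, Set.mem_ofPred_eq, not_or, not_exists,
      not_and, not_le] at ha
    exact le_sum_sq_of_le_on_cubeGrid (fun i => Y i ω) n.cast_nonneg (fun l => (ha.1 l).le)
      (fun b hb hbb => (ha.2 b hb hbb).le) a
  have hk : (k : ℝ) ≤ (120 * k + 1) ^ k := by
    rcases eq_or_ne k 0 with h | h
    · simp [h]
    · exact le_trans (by linarith) (le_self_pow₀ (by linarith [k.cast_nonneg (α := ℝ)]) h)
  calc P.real {ω | ∃ a, ∑ i, (Y i ω ⬝ᵥ a) ^ 2 < n / 400 * (a ⬝ᵥ a)}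
      ≤ P.real (longColumn ∪ shortImage) := measureReal_mono hcover
    _ ≤ P.real longColumn + P.real shortImage := measureReal_union_le _ _
    _ ≤ k * (1 / 2) ^ n + (2 * (60 * k : ℕ) + 1) ^ k * (1 / 2) ^ n :=
        add_le_add (measureReal_exists_nine_mul_card_le_sum_column_sq_le hindep hY)
          (measureReal_exists_mem_cubeGrid_sum_sq_le_le hindep hY _)
    _ = (k + (120 * k + 1) ^ k) * (1 / 2) ^ n := by push_cast; ring
    _ ≤ (2 * (120 * k + 1) ^ k) * (1 / 2) ^ n := by
        gcongr
        linarith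

lemma measureReal_exists_supported_sum_sq_lt [Fintype m] {X : ι → Ω → m → ℝ}
    {S : Matrix m m ℝ} (hindep : iIndepFun X P) (hX : ∀ i, HasGaussianMarginals (X i) S P)
    (hS : S.PosDef) (α : Finset m) :
    P.real {ω | ∃ v, (∀ j ∉ α, v j = 0) ∧
        ∑ i, (X i ω ⬝ᵥ v) ^ 2 < Fintype.card ι / 400 * (v ⬝ᵥ S *ᵥ v)} ≤
      2 * (120 * #α + 1) ^ #α * (1 / 2) ^ Fintype.card ι := by
  classical
  have := hindep.isProbabilityMeasure
  obtain ⟨L, hL, hspan⟩ := exists_whitening_of_posDef hS α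
  have hindepL : iIndepFun (fun i ω => X i ω ᵥ* L) P :=
    hindep.comp (fun _ x => x ᵥ* L) fun _ => measurable_pi_lambda _ fun l => by
      simp only [Matrix.vecMul, dotProduct]
      fun_prop
  have hquad (a : α → ℝ) : (L *ᵥ a) ⬝ᵥ S *ᵥ (L *ᵥ a) = a ⬝ᵥ a := by
    rw [mulVec_dotProduct_mulVec_mulVec, hL, one_mulVec]
  have hisotropic := measureReal_exists_sum_sq_lt_of_isotropic hindepL fun i => hL ▸ (hX i).vecMul L
  rw [Fintype.card_coe] at hisotropic
  refine (measureReal_mono ?_).trans hisotropic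
  rintro ω ⟨v, hv, hlt⟩
  obtain ⟨a, rfl⟩ := hspan v hv
  exact ⟨a, by simpa only [hquad, dotProduct_mulVec] using hlt⟩

end SubmatrixBound

section UnionBound

lemma sum_finset_inv_card_pow_card_le_exp_one [Fintype m] :
    ∑ α : Finset m, ((Fintype.card m : ℝ)⁻¹) ^ #α ≤ Real.exp 1 := by
  have hbinom := Fintype.sum_pow_mul_eq_add_pow m (Fintype.card m : ℝ)⁻¹ 1
  simp only [one_pow, mul_one] at hbinom
  rw [hbinom, add_comm]
  exact Real.one_add_inv_pow_le_exp

lemma grid_card_mul_half_pow_le {k n p : ℕ} (hp : 1 < p) (hkp : k ≤ p)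
    (hk : (k : ℝ) < Real.log (3 / 2) / 9 * n / Real.log p) :
    (120 * k + 1) ^ k * (1 / 2 : ℝ) ^ n ≤ (p : ℝ)⁻¹ ^ k * (3 / 4) ^ n := by
  have hp2 : (2 : ℝ) ≤ p := by exact_mod_cast hp
  have hkp' : (k : ℝ) ≤ p := by exact_mod_cast hkp
  have hlogp : 0 < Real.log p := Real.log_pos (by linarith)
  have hbase : 120 * (k : ℝ) + 1 ≤ (p : ℝ) ^ 8 := by
    have hpow : (2 : ℝ) ^ 7 ≤ (p : ℝ) ^ 7 := by gcongr
    calc 120 * (k : ℝ) + 1 ≤ 2 ^ 7 * p := by linarith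
      _ ≤ p ^ 7 * p := by gcongr
      _ = p ^ 8 := by ring
  have hpow : (p : ℝ) ^ (9 * k) ≤ (3 / 2) ^ n := by
    rw [← Real.log_le_log_iff (by positivity) (by positivity), Real.log_pow, Real.log_pow]
    rw [lt_div_iff₀ hlogp] at hk
    push_cast
    linarith
  calc (120 * k + 1) ^ k * (1 / 2 : ℝ) ^ n
      ≤ ((p : ℝ) ^ 8) ^ k * (1 / 2) ^ n := by gcongr
    _ = (p : ℝ)⁻¹ ^ k * (p ^ (9 * k) * (1 / 2) ^ n) := by
        rw [← mul_assoc, ← pow_mul, show 9 * k = k + 8 * k by ring, pow_add, ← mul_assoc,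
          ← mul_pow, inv_mul_cancel₀ (by positivity), one_pow, one_mul]
    _ ≤ (p : ℝ)⁻¹ ^ k * ((3 / 2) ^ n * (1 / 2) ^ n) := by gcongr
    _ = (p : ℝ)⁻¹ ^ k * (3 / 4) ^ n := by rw [← mul_pow]; norm_num

theorem measureReal_exists_sparse_sum_sq_lt [Fintype m] {X : ι → Ω → m → ℝ}
    {S : Matrix m m ℝ} (hindep : iIndepFun X P) (hX : ∀ i, HasGaussianMarginals (X i) S P)
    (hS : S.PosDef) (hm : 1 < Fintype.card m) :
    P.real {ω | ∃ α : Finset m,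
        (#α : ℝ) < Real.log (3 / 2) / 9 * Fintype.card ι / Real.log (Fintype.card m) ∧
        ∃ v, (∀ j ∉ α, v j = 0) ∧
          ∑ i, (X i ω ⬝ᵥ v) ^ 2 < Fintype.card ι / 400 * (v ⬝ᵥ S *ᵥ v)} ≤
      2 * Real.exp 1 * (3 / 4) ^ Fintype.card ι := by
  set n := Fintype.card ι
  set p := Fintype.card m
  let small : Finset (Finset m) := {α | (#α : ℝ) < Real.log (3 / 2) / 9 * n / Real.log p}
  let bad (α : Finset m) : Set Ω := {ω | ∃ v, (∀ j ∉ α, v j = 0) ∧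
    ∑ i, (X i ω ⬝ᵥ v) ^ 2 < n / 400 * (v ⬝ᵥ S *ᵥ v)}
  have hbad (α) (hα : α ∈ small) : P.real (bad α) ≤ 2 * (3 / 4) ^ n * (p : ℝ)⁻¹ ^ #α := by
    have hgrid := grid_card_mul_half_pow_le hm α.card_le_univ (Finset.mem_filter.1 hα).2
    linarith [measureReal_exists_supported_sum_sq_lt hindep hX hS α]
  have hcover : {ω | ∃ α : Finset m, (#α : ℝ) < Real.log (3 / 2) / 9 * n / Real.log p ∧
      ω ∈ bad α} = ⋃ α ∈ small, bad α := by
    ext ω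
    simp only [small, Set.mem_ofPred_eq, Set.mem_iUnion, Finset.mem_filter_univ, exists_prop]
  calc P.real {ω | ∃ α : Finset m, (#α : ℝ) < Real.log (3 / 2) / 9 * n / Real.log p ∧ ω ∈ bad α}
      = P.real (⋃ α ∈ small, bad α) := by rw [hcover]
    _ ≤ ∑ α ∈ small, P.real (bad α) := measureReal_biUnion_finset_le _ _
    _ ≤ ∑ α ∈ small, 2 * (3 / 4) ^ n * (p : ℝ)⁻¹ ^ #α := Finset.sum_le_sum hbad
    _ ≤ ∑ α : Finset m, 2 * (3 / 4) ^ n * (p : ℝ)⁻¹ ^ #α :=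
        Finset.sum_le_univ_sum_of_nonneg fun α => by positivity
    _ = 2 * (3 / 4) ^ n * ∑ α : Finset m, (p : ℝ)⁻¹ ^ #α := by rw [Finset.mul_sum]
    _ ≤ 2 * (3 / 4) ^ n * Real.exp 1 := by
        gcongr
        exact sum_finset_inv_card_pow_card_le_exp_one
    _ = 2 * Real.exp 1 * (3 / 4) ^ n := by ring

end UnionBound

section RandomRows

lemma isProbabilityMeasure_of_map_eq_gaussianReal {E : Type*} [MeasurableSpace E] {μ : Measure E}
    {f : E → ℝ} {a : ℝ} {v : ℝ≥0} (h : μ.map f = gaussianReal a v) : IsProbabilityMeasure μ := by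
  have : IsProbabilityMeasure (μ.map f) := by
    rw [h]
    infer_instance
  exact Measure.isProbabilityMeasure_of_map f

lemma iIndepFun_eval_of_hasLaw_pi {E : Type*} [MeasurableSpace E] [IsProbabilityMeasure P]
    {X : Ω → ι → E} {μ : Measure E} [IsProbabilityMeasure μ]
    (hX : HasLaw X (Measure.pi fun _ => μ) P) : iIndepFun (fun i ω => X ω i) P :=
  (iIndepFun_iff_hasLaw_pi_pi fun i => (measurePreserving_eval _ i).hasLaw.fun_comp hX).2 hX

variable [Fintype m] {S : m → m → ℝ}

lemma dotProduct_of_mulVec (S : m → m → ℝ) (v : m → ℝ) :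
    v ⬝ᵥ Matrix.of S *ᵥ v = ∑ j, ∑ k, v j * S j k * v k := by
  simp only [dotProduct, mulVec, of_apply, Finset.mul_sum, mul_assoc]

lemma posDef_of_forall_mul_sum_sq_le {c₀ : ℝ} (hc₀ : 0 < c₀) (hsymm : ∀ j k, S j k = S k j)
    (heig : ∀ v : m → ℝ, c₀ * ∑ j, v j ^ 2 ≤ ∑ j, ∑ k, v j * S j k * v k) :
    (Matrix.of S).PosDef := by
  refine PosDef.of_dotProduct_mulVec_pos (IsHermitian.ext fun j k => hsymm k j) fun v hv => ?_
  have hpos : 0 < ∑ j, v j ^ 2 := by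
    simpa only [dotProduct, star_trivial, sq] using dotProduct_star_self_pos_iff.2 hv
  rw [star_trivial, dotProduct_of_mulVec]
  exact (mul_pos hc₀ hpos).trans_le (heig v)

lemma hasGaussianMarginals_of_map_eq {Y : Ω → m → ℝ} {μ : Measure (m → ℝ)} (hY : HasLaw Y μ P)
    (hgauss : ∀ v : m → ℝ, μ.map (fun x => ∑ j, v j * x j) =
      gaussianReal 0 (∑ j, ∑ k, v j * S j k * v k).toNNReal) :
    HasGaussianMarginals Y (Matrix.of S) P := by
  intro v
  have hlaw : HasLaw (fun x => v ⬝ᵥ x) (gaussianReal 0 (v ⬝ᵥ Matrix.of S *ᵥ v).toNNReal) μ :=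
    ⟨(Finset.measurable_sum _ fun j _ => (measurable_pi_apply j).const_mul _).aemeasurable, by
      rw [dotProduct_of_mulVec]
      exact hgauss v⟩
  simpa only [dotProduct_comm v] using hlaw.fun_comp hY

end RandomRows

end

lemma sqrt_div_mul_sqrt_le_sqrt_one_div_mul {c₀ C n s q t : ℝ} (hC : 0 ≤ C) (hn : 0 < n)
    (hs : 0 ≤ s) (hsq : c₀ * s ≤ q) (hqt : n / C * q ≤ t) : √(c₀ / C) * √s ≤ √(1 / n * t) := by
  rw [← Real.sqrt_mul' _ hs]
  refine Real.sqrt_le_sqrt ?_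
  calc c₀ / C * s = 1 / n * (n / C * (c₀ * s)) := by field_simp
    _ ≤ 1 / n * (n / C * q) := by gcongr
    _ ≤ 1 / n * t := by gcongr

lemma tendsto_measure_nhds_one_of_compl_le {β : Type*} {l : Filter β} {Ω : β → Type*}
    [∀ n, MeasurableSpace (Ω n)] {P : ∀ n, Measure (Ω n)} [∀ n, IsProbabilityMeasure (P n)]
    {A : ∀ n, Set (Ω n)} {ε : β → ℝ} (hA : ∀ᶠ n in l, (P n).real (A n)ᶜ ≤ ε n)
    (hε : Tendsto ε l (𝓝 0)) : Tendsto (fun n => P n (A n)) l (𝓝 1) := by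
  have hlower : Tendsto (fun n => ENNReal.ofReal (1 - ε n)) l (𝓝 1) := by
    simpa using ENNReal.tendsto_ofReal (hε.const_sub 1)
  refine tendsto_of_tendsto_of_tendsto_of_le_of_le' hlower tendsto_const_nhds ?_
    (Eventually.of_forall fun n => prob_le_one)
  filter_upwards [hA] with n hn
  have hcover : 1 ≤ (P n).real (A n) + (P n).real (A n)ᶜ := by
    simpa using measureReal_union_le (μ := P n) (A n) (A n)ᶜ
  exact ENNReal.ofReal_le_of_le_toReal (by rw [← measureReal_def]; linarith)

theorem robust_spark_gaussian_design_general
    (c₀ : ℝ) (hc₀ : 0 < c₀)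
    (p : ℕ → ℕ) (hp : ∀ᶠ n in atTop, 1 < p n)
    (S : ∀ n, Fin (p n) → Fin (p n) → ℝ)
    (hsymm : ∀ n, ∀ j k, S n j k = S n k j)
    (heig : ∀ n, ∀ v : Fin (p n) → ℝ,
      c₀ * ∑ j, (v j) ^ 2 ≤ ∑ j, ∑ k, v j * S n j k * v k)
    (Ω : ℕ → Type*) [∀ n, MeasurableSpace (Ω n)]
    (P : ∀ n, Measure (Ω n)) [∀ n, IsProbabilityMeasure (P n)]
    (X : ∀ n, Ω n → (Fin n → Fin (p n) → ℝ))
    (hXmeas : ∀ n, AEMeasurable (X n) (P n))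
    (μrow : ∀ n, Measure (Fin (p n) → ℝ))
    (hrows : ∀ n, Measure.map (X n) (P n) = Measure.pi fun _ : Fin n => μrow n)
    (hgauss : ∀ n, ∀ v : Fin (p n) → ℝ,
      Measure.map (fun x : Fin (p n) → ℝ => ∑ j, v j * x j) (μrow n) =
        gaussianReal 0 (∑ j, ∑ k, v j * S n j k * v k).toNNReal) :
    ∃ c : ℝ, 0 < c ∧ ∃ ct : ℝ, 0 < ct ∧
      Tendsto (fun n =>
        P n {ω | ∀ α : Finset (Fin (p n)), (#α : ℝ) < ct * n / Real.log (p n) →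
          ∀ v : Fin (p n) → ℝ, (∀ j, j ∉ α → v j = 0) →
            c * √(∑ j, (v j) ^ 2) ≤ √((1 / (n : ℝ)) * ∑ i, (∑ j, X n ω i j * v j) ^ 2)})
        atTop (𝓝 1) := by
  have hrate : Tendsto (fun n : ℕ => 2 * Real.exp 1 * (3 / 4) ^ n) atTop (𝓝 0) := by
    simpa only [mul_zero] using (tendsto_pow_atTop_nhds_zero_of_lt_one (r := (3 / 4 : ℝ))
      (by norm_num) (by norm_num)).const_mul (2 * Real.exp 1)
  refine ⟨√(c₀ / 400), by positivity, Real.log (3 / 2) / 9,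
    div_pos (Real.log_pos (by norm_num)) (by norm_num),
    tendsto_measure_nhds_one_of_compl_le ?_ hrate⟩
  filter_upwards [hp, eventually_gt_atTop 0] with n hpn hn
  have := isProbabilityMeasure_of_map_eq_gaussianReal (hgauss n 0)
  have hlaw : HasLaw (X n) (Measure.pi fun _ => μrow n) (P n) := ⟨hXmeas n, hrows n⟩
  have htail := measureReal_exists_sparse_sum_sq_lt (iIndepFun_eval_of_hasLaw_pi hlaw)
    (fun i => hasGaussianMarginals_of_map_eq
      ((measurePreserving_eval _ i).hasLaw.fun_comp hlaw) (hgauss n))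
    (posDef_of_forall_mul_sum_sq_le hc₀ (hsymm n) (heig n)) (by rwa [Fintype.card_fin])
  rw [Fintype.card_fin, Fintype.card_fin] at htail
  refine (measureReal_mono fun ω hω => ?_).trans htail
  contrapose! hω
  simp only [Set.mem_ofPred_eq, not_exists, not_and, not_lt, dotProduct_of_mulVec] at hω
  exact Set.notMem_compl_iff.2 fun α hα v hv =>
    sqrt_div_mul_sqrt_le_sqrt_one_div_mul (by norm_num) (by exact_mod_cast hn)
      (Finset.sum_nonneg fun j _ => sq_nonneg _) (heig n v) (hω α hα v hv)

/-- Proposition 2 of the paper: for Gaussian random designs with `n` i.i.d. rows drawn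
from `N(0, Σ)` on `ℝ^{p(n)}`, where `Σ` is symmetric with smallest eigenvalue at least
`c₀ > 0` and `log p(n) = o(n)`, there exist constants `c, c̃ > 0` such that with
probability tending to one, every column submatrix of `n^{−1/2}X` with fewer than
`c̃·n/log p(n)` columns has smallest singular value at least `c`; that is, the robust
spark `κ_c` of `X` is at least `c̃·n/log p(n)` with asymptotic probability one.

The rows being i.i.d. `N(0, Σ)` is expressed by (i) the law of `X` being the `n`-fold
product of a fixed row distribution `μ n`, and (ii) every linear functional
`x ↦ Σⱼ v_j x_j` of the row distribution being Gaussian with mean `0` and variance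
`vᵀΣv`. -/
theorem robust_spark_gaussian_design
    (c₀ : ℝ) (hc₀ : 0 < c₀)
    (p : ℕ → ℕ) (hpn : ∀ n, n < p n)
    (hlog : (fun n => Real.log (p n)) =o[atTop] (fun n => (n : ℝ)))
    (S : ∀ n, Fin (p n) → Fin (p n) → ℝ)
    (hsymm : ∀ n, ∀ j k, S n j k = S n k j)
    (heig : ∀ n, ∀ v : Fin (p n) → ℝ,
      c₀ * ∑ j, (v j) ^ 2 ≤ ∑ j, ∑ k, v j * S n j k * v k)
    (Ω : ℕ → Type) [∀ n, MeasurableSpace (Ω n)]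
    (P : ∀ n, Measure (Ω n)) [∀ n, IsProbabilityMeasure (P n)]
    (X : ∀ n, Ω n → (Fin n → Fin (p n) → ℝ))
    (hXmeas : ∀ n, Measurable (X n))
    (μrow : ∀ n, Measure (Fin (p n) → ℝ))
    (hrows : ∀ n, Measure.map (X n) (P n) = Measure.pi fun _ : Fin n => μrow n)
    (hgauss : ∀ n, ∀ v : Fin (p n) → ℝ,
      Measure.map (fun x : Fin (p n) → ℝ => ∑ j, v j * x j) (μrow n) =
        ProbabilityTheory.gaussianReal 0
          (Real.toNNReal (∑ j, ∑ k, v j * S n j k * v k))) :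
    ∃ c : ℝ, 0 < c ∧ ∃ ct : ℝ, 0 < ct ∧
      Tendsto (fun n =>
        P n {ω | ∀ α : Finset (Fin (p n)), (α.card : ℝ) < ct * n / Real.log (p n) →
          ∀ v : Fin (p n) → ℝ, (∀ j, j ∉ α → v j = 0) →
            c * Real.sqrt (∑ j, (v j) ^ 2) ≤
              Real.sqrt ((1 / (n : ℝ)) * ∑ i, (∑ j, X n ω i j * v j) ^ 2)})
        atTop (nhds 1) := by
  exact robust_spark_gaussian_design_general c₀ hc₀ p
    ((eventually_gt_atTop 0).mono fun n hn => (Nat.succ_le_of_lt hn).trans_lt (hpn n))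
    S hsymm heig Ω P X (fun n => (hXmeas n).aemeasurable) μrow hrows hgauss
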